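/- Let p be a prime and K a field of characteristic p. The set S of matrices !![a, 0, 0; b, a^p, 0; c, b^p, a^(p^2)] with a, b, c ∈ K, a^(p^3) = a and a ≠ 0 is a subgroup of GL₃(K) (every element of S is invertible, S is closed under matrix multiplication and matrix inversion, and contains the identity), and the map sending such a matrix to its (1,1)-entry a is a surjective group homomorphism from S onto the subgroup {u ∈ Kˣ : u^(p^3) = u} of Kˣ, whose kernel is exactly the set of matrices in S with a = 1. -/

import Mathlib

open Matrix

/-- The set `S` of matrices `!![a,0,0; b,a^p,0; c,b^p,a^(p²)]` with `a^(p³) = a`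
and `a ≠ 0`. -/
def Sset (p : ℕ) (K : Type*) [Field K] : Set (Matrix (Fin 3) (Fin 3) K) :=
  {M | ∃ a b c : K, a ^ p ^ 3 = a ∧ a ≠ 0 ∧
    M = !![a, 0, 0; b, a ^ p, 0; c, b ^ p, a ^ p ^ 2]}

/-!
The set `S` consists of the invertible `M` compatible with the Dieudonné module structure:
`F̄ * M^φ = M * F̄` and `V̄ * M = M^φ * V̄`. The first relation forces the shape
`!![a, 0, 0; b, a^p, 0; c, b^p, a^(p²)]`, the second the condition `a^(p³) = a`. Both say that a
fixed matrix intertwines two homomorphic images of `M`, so they cut out a subgroup of `GL₃`. Its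
elements have first row `(a, 0, 0)`, so `a` is multiplicative; `b = c = 0` gives surjectivity.
The argument works for every endomorphism `σ` of a commutative ring in place of Frobenius.
-/

section Intertwiners

variable {G M : Type*} [Group G] [Monoid M]

/-- The subgroup of those `g` for which `f` intertwines `α g` and `β g`, that is,
`f * α g = β g * f`. -/
def intertwinerSubgroup (α β : G →* M) (f : M) : Subgroup G where
  carrier := {g | SemiconjBy f (α g) (β g)}
  mul_mem' {g h} hg hh := by
    simpa only [Set.mem_ofPred_eq, map_mul] using SemiconjBy.mul_right hg hh
  one_mem' := by simp only [Set.mem_ofPred_eq, map_one, SemiconjBy.one_right]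
  inv_mem' {g} hg :=
    SemiconjBy.units_inv_right (x := α.toHomUnits g) (y := β.toHomUnits g) hg

end Intertwiners

theorem mul_apply_of_row_eq_zero_off_diag {m n R : Type*} [Fintype n]
    [NonUnitalNonAssocSemiring R] {M : Matrix n n R} {i : n} (hM : ∀ j ≠ i, M i j = 0)
    (N : Matrix n m R) (k : m) :
    (M * N) i k = M i i * N i k := by
  rw [Matrix.mul_apply]
  exact Fintype.sum_eq_single i fun j hj => by rw [hM j hj, zero_mul]

section Semiring

variable (R : Type*) [Semiring R]

/-- The matrix `F̄` of Frobenius on the Dieudonné module of `H_{2,1}[p]`. -/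
def frobeniusMatrix : Matrix (Fin 3) (Fin 3) R :=
  !![0, 0, 0; 1, 0, 0; 0, 1, 0]

/-- The matrix `V̄` of Verschiebung on the Dieudonné module of `H_{2,1}[p]`. -/
def verschiebungMatrix : Matrix (Fin 3) (Fin 3) R :=
  !![0, 0, 0; 0, 0, 0; 1, 0, 0]

variable {R}

/-- The lower triangular matrix with first column `(a, b, c)` in which each step down a diagonal
applies `σ`. For `σ` the Frobenius endomorphism these are the matrices whose shape defines `S`. -/
def twistedToeplitz (σ : R →+* R) (a b c : R) : Matrix (Fin 3) (Fin 3) R :=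
  !![a, 0, 0; b, σ a, 0; c, σ b, σ^[2] a]

/-- The analogue of the set `S` for an endomorphism `σ` of an arbitrary semiring; `a ≠ 0` becomes
the invertibility of `a`. -/
def twistedToeplitzSet (σ : R →+* R) : Set (Matrix (Fin 3) (Fin 3) R) :=
  {M | ∃ a b c : R, σ^[3] a = a ∧ IsUnit a ∧ M = twistedToeplitz σ a b c}

variable {σ : R →+* R}

theorem frobeniusMatrix_mul (N : Matrix (Fin 3) (Fin 3) R) :
    frobeniusMatrix R * N = !![0, 0, 0; N 0 0, N 0 1, N 0 2; N 1 0, N 1 1, N 1 2] := by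
  ext i j
  fin_cases i <;> fin_cases j <;> simp [frobeniusMatrix, Matrix.mul_apply, Fin.sum_univ_three]

theorem mul_frobeniusMatrix (N : Matrix (Fin 3) (Fin 3) R) :
    N * frobeniusMatrix R = !![N 0 1, N 0 2, 0; N 1 1, N 1 2, 0; N 2 1, N 2 2, 0] := by
  ext i j
  fin_cases i <;> fin_cases j <;> simp [frobeniusMatrix, Matrix.mul_apply, Fin.sum_univ_three]

theorem verschiebungMatrix_mul (N : Matrix (Fin 3) (Fin 3) R) :
    verschiebungMatrix R * N = !![0, 0, 0; 0, 0, 0; N 0 0, N 0 1, N 0 2] := by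
  ext i j
  fin_cases i <;> fin_cases j <;> simp [verschiebungMatrix, Matrix.mul_apply, Fin.sum_univ_three]

theorem mul_verschiebungMatrix (N : Matrix (Fin 3) (Fin 3) R) :
    N * verschiebungMatrix R = !![N 0 2, 0, 0; N 1 2, 0, 0; N 2 2, 0, 0] := by
  ext i j
  fin_cases i <;> fin_cases j <;> simp [verschiebungMatrix, Matrix.mul_apply, Fin.sum_univ_three]

theorem semiconjBy_frobeniusMatrix_iff {M : Matrix (Fin 3) (Fin 3) R} :
    SemiconjBy (frobeniusMatrix R) (M.map σ) M ↔ ∃ a b c, M = twistedToeplitz σ a b c := by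
  rw [SemiconjBy, frobeniusMatrix_mul, mul_frobeniusMatrix]
  constructor
  · intro h
    have h01 : 0 = M 0 1 := congrFun₂ h 0 0
    have h02 : 0 = M 0 2 := congrFun₂ h 0 1
    have h11 : σ (M 0 0) = M 1 1 := congrFun₂ h 1 0
    have h12 : σ (M 0 1) = M 1 2 := congrFun₂ h 1 1
    have h21 : σ (M 1 0) = M 2 1 := congrFun₂ h 2 0
    have h22 : σ (M 1 1) = M 2 2 := congrFun₂ h 2 1
    refine ⟨M 0 0, M 1 0, M 2 0, M.eta_fin_three.trans ?_⟩
    simp only [twistedToeplitz, ← h22, ← h21, ← h12, ← h11, ← h02, ← h01, map_zero,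
      Function.iterate_succ_apply, Function.iterate_zero_apply]
  · rintro ⟨a, b, c, rfl⟩
    simp [twistedToeplitz]

theorem semiconjBy_verschiebungMatrix_iff {a b c : R} :
    SemiconjBy (verschiebungMatrix R) (twistedToeplitz σ a b c)
      ((twistedToeplitz σ a b c).map σ) ↔ σ^[3] a = a := by
  rw [SemiconjBy, verschiebungMatrix_mul, mul_verschiebungMatrix]
  constructor
  · intro h
    exact (congrFun₂ h 2 0).symm
  · intro ha
    have ha' : σ (σ (σ a)) = a := ha
    simp [twistedToeplitz, ha']

theorem twistedToeplitz_apply_zero_zero (a b c : R) : twistedToeplitz σ a b c 0 0 = a :=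
  rfl

theorem apply_zero_of_mem_twistedToeplitzSet {M : Matrix (Fin 3) (Fin 3) R}
    (hM : M ∈ twistedToeplitzSet σ) : ∀ j ≠ 0, M 0 j = 0 := by
  obtain ⟨a, b, c, -, -, rfl⟩ := hM
  simp [twistedToeplitz, Fin.forall_fin_succ]

end Semiring

section CommRing

variable {R : Type*} [CommRing R]

theorem isUnit_twistedToeplitz_iff {σ : R →+* R} {a b c : R} :
    IsUnit (twistedToeplitz σ a b c) ↔ IsUnit a := by
  have hdet : (twistedToeplitz σ a b c).det = a * σ a * σ^[2] a := by
    simp [twistedToeplitz, Matrix.det_fin_three]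
  rw [Matrix.isUnit_iff_isUnit_det, hdet]
  exact ⟨fun h => isUnit_of_mul_isUnit_left (isUnit_of_mul_isUnit_left h),
    fun h => (h.mul (h.map σ)).mul ((h.map σ).map σ)⟩

/-- The automorphisms of the Dieudonné module of `H_{2,1}[p]`, as matrices, when `σ` is the
Frobenius automorphism of a perfect field. They commute with the `σ`-linear map of matrix `F̄` and
the `σ⁻¹`-linear map of matrix `V̄`; the second condition `M * V̄ = V̄ * M^(σ⁻¹)` is encoded as
`V̄ * M = M^σ * V̄`, which makes sense for every `σ`. -/
def dieudonneAut (σ : R →+* R) : Subgroup (GL (Fin 3) R) :=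
  let coeHom := Units.coeHom (Matrix (Fin 3) (Fin 3) R)
  let twistHom := coeHom.comp (GeneralLinearGroup.map σ)
  intertwinerSubgroup twistHom coeHom (frobeniusMatrix R) ⊓
    intertwinerSubgroup coeHom twistHom (verschiebungMatrix R)

theorem mem_dieudonneAut {σ : R →+* R} {g : GL (Fin 3) R} :
    g ∈ dieudonneAut σ ↔
      SemiconjBy (frobeniusMatrix R) ((g : Matrix (Fin 3) (Fin 3) R).map σ) g ∧
        SemiconjBy (verschiebungMatrix R) g ((g : Matrix (Fin 3) (Fin 3) R).map σ) :=
  Iff.rfl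

theorem mem_dieudonneAut_iff_coe_mem {σ : R →+* R} {g : GL (Fin 3) R} :
    g ∈ dieudonneAut σ ↔ (g : Matrix (Fin 3) (Fin 3) R) ∈ twistedToeplitzSet σ := by
  rw [mem_dieudonneAut, semiconjBy_frobeniusMatrix_iff]
  constructor
  · rintro ⟨⟨a, b, c, hg⟩, hV⟩
    rw [hg, semiconjBy_verschiebungMatrix_iff] at hV
    exact ⟨a, b, c, hV, isUnit_twistedToeplitz_iff.1 (hg ▸ g.isUnit), hg⟩
  · rintro ⟨a, b, c, ha, -, hg⟩
    exact ⟨⟨a, b, c, hg⟩, by rwa [hg, semiconjBy_verschiebungMatrix_iff]⟩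

/-- The `(1,1)`-entry as a character of `dieudonneAut σ`. -/
def topLeftCharacter (σ : R →+* R) : dieudonneAut σ →* Rˣ :=
  MonoidHom.toHomUnits
    { toFun := fun g => (g : GL (Fin 3) R) 0 0
      map_one' := rfl
      map_mul' := fun g _ => mul_apply_of_row_eq_zero_off_diag
        (apply_zero_of_mem_twistedToeplitzSet (mem_dieudonneAut_iff_coe_mem.1 g.2)) _ 0 }

variable {σ : R →+* R}

theorem coe_topLeftCharacter (g : dieudonneAut σ) :
    (topLeftCharacter σ g : R) = (g : GL (Fin 3) R) 0 0 :=
  rfl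

theorem mem_range_topLeftCharacter {u : Rˣ} :
    u ∈ (topLeftCharacter σ).range ↔ σ^[3] (u : R) = u := by
  constructor
  · rintro ⟨g, rfl⟩
    obtain ⟨a, b, c, ha, -, hg⟩ := mem_dieudonneAut_iff_coe_mem.1 g.2
    rwa [coe_topLeftCharacter, hg, twistedToeplitz_apply_zero_zero]
  · intro hu
    obtain ⟨g, hg⟩ : IsUnit (twistedToeplitz σ (u : R) 0 0) :=
      isUnit_twistedToeplitz_iff.2 u.isUnit
    have hmem : g ∈ dieudonneAut σ :=
      mem_dieudonneAut_iff_coe_mem.2 ⟨u, 0, 0, hu, u.isUnit, hg⟩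
    refine ⟨⟨g, hmem⟩, Units.ext ?_⟩
    rw [coe_topLeftCharacter, hg, twistedToeplitz_apply_zero_zero]

theorem mem_ker_topLeftCharacter {g : dieudonneAut σ} :
    g ∈ (topLeftCharacter σ).ker ↔ (g : GL (Fin 3) R) 0 0 = 1 := by
  rw [MonoidHom.mem_ker, ← Units.val_eq_one, coe_topLeftCharacter]

end CommRing

theorem stmt_5_general {R : Type*} [CommRing R] (σ : R →+* R) :
    (∀ M ∈ twistedToeplitzSet σ, IsUnit M) ∧
    ∃ H : Subgroup (GL (Fin 3) R),
      (∀ M : GL (Fin 3) R, M ∈ H ↔ (M : Matrix (Fin 3) (Fin 3) R) ∈ twistedToeplitzSet σ) ∧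
      ∃ φ : H →* Rˣ,
        (∀ M : H, (φ M : R) = ((M : GL (Fin 3) R) : Matrix (Fin 3) (Fin 3) R) 0 0) ∧
        (φ.range : Set Rˣ) = {u : Rˣ | σ^[3] (u : R) = u} ∧
        (∀ M : H, M ∈ φ.ker ↔
          ((M : GL (Fin 3) R) : Matrix (Fin 3) (Fin 3) R) 0 0 = 1) := by
  refine ⟨?_, dieudonneAut σ, fun _ => mem_dieudonneAut_iff_coe_mem, topLeftCharacter σ,
    coe_topLeftCharacter, Set.ext fun _ => mem_range_topLeftCharacter,
    fun _ => mem_ker_topLeftCharacter⟩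
  rintro _ ⟨a, b, c, -, ha, rfl⟩
  exact isUnit_twistedToeplitz_iff.2 ha

theorem Sset_eq_twistedToeplitzSet_frobenius (p : ℕ) (K : Type*) [Field K] [ExpChar K p] :
    Sset p K = twistedToeplitzSet (frobenius K p) := by
  simp only [Sset, twistedToeplitzSet, twistedToeplitz, iterate_frobenius, frobenius_def,
    isUnit_iff_ne_zero]

/-- Every element of `S` is invertible; `S` is (the underlying set of matrices of)
a subgroup of `GL₃(K)`; and the `(1,1)`-entry map is a surjective group homomorphism
from `S` onto the subgroup `{u ∈ Kˣ : u^(p³) = u}` of `Kˣ`, with kernel exactly the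
matrices in `S` whose `(1,1)`-entry is `1`. -/
theorem stmt_5 (p : ℕ) [Fact p.Prime] (K : Type*) [Field K] [CharP K p] :
    (∀ M ∈ Sset p K, IsUnit M) ∧
    ∃ H : Subgroup (GL (Fin 3) K),
      (∀ M : GL (Fin 3) K, M ∈ H ↔ (M : Matrix (Fin 3) (Fin 3) K) ∈ Sset p K) ∧
      ∃ φ : H →* Kˣ,
        (∀ M : H, (φ M : K) = ((M : GL (Fin 3) K) : Matrix (Fin 3) (Fin 3) K) 0 0) ∧
        (φ.range : Set Kˣ) = {u : Kˣ | (u : K) ^ p ^ 3 = (u : K)} ∧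
        (∀ M : H, M ∈ φ.ker ↔
          ((M : GL (Fin 3) K) : Matrix (Fin 3) (Fin 3) K) 0 0 = 1) := by
  simpa only [Sset_eq_twistedToeplitzSet_frobenius, iterate_frobenius] using
    stmt_5_general (frobenius K p)
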